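/- Fix integers m ≥ 1, s ≥ 2 and d ≥ 2s−1. Then σ_{s,d−s+2}(X_{m,d}) ≠ ∅; moreover this is witnessed by points in the span of ν_d(L) for a line L ⊂ ℙ^m: for any line L ⊂ ℙ^m and any P ∈ ⟨ν_d(L)⟩, the symmetric rank and border rank of P with respect to X_{m,d} coincide with those computed with respect to the rational normal curve ν_d(L) ≅ X_{1,d}. -/

import Mathlib

open scoped LinearAlgebra.Projectivization

noncomputable section

/-- The polynomial ring in `m+1` variables over `K`: homogeneous coordinate ring of `ℙ^m`. -/
abbrev PR (K : Type) [Field K] (m : ℕ) : Type := MvPolynomial (Fin (m+1)) K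

/-- The space of degree-`d` forms in `m+1` variables. -/
abbrev Hd (K : Type) [Field K] (m d : ℕ) : Submodule K (PR K m) :=
  MvPolynomial.homogeneousSubmodule (Fin (m+1)) K d

/-- Projective `m`-space over `K`. -/
abbrev Pm (K : Type) [Field K] (m : ℕ) := ℙ K (Fin (m+1) → K)

/-- The target projective space `ℙ^n`, `n = C(m+d,m) - 1`, of the degree-`d` Veronese
embedding, realized as the projectivization of the dual of the space of degree-`d` forms
(the space of degree-`d` symmetric tensors). -/
abbrev PN (K : Type) [Field K] (m d : ℕ) := ℙ K (Module.Dual K (Hd K m d))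

variable {K : Type} [Field K] {m : ℕ}

/-- Hilbert function of `R/I` in degree `t`. -/
def hilbQ (I : Ideal (PR K m)) (t : ℕ) : ℕ :=
  Module.finrank K ((Hd K m t).map (Ideal.Quotient.mkₐ K I).toLinearMap)

/-- The degree (length) of the projective scheme defined by `I`: the eventual value of the
Hilbert function of `R/I`. -/
def idealDeg (I : Ideal (PR K m)) : ℕ := Filter.limsup (fun t => hilbQ I t) Filter.atTop

/-- `h^1(𝓘_Z(d))` for the zero-dimensional scheme `Z` with (saturated) ideal `I`:
it equals `deg Z - dim (R/I)_d`. -/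
def h1I (I : Ideal (PR K m)) (d : ℕ) : ℕ := idealDeg I - hilbQ I d

/-- An ideal is homogeneous. -/
def IsHomogI (I : Ideal (PR K m)) : Prop :=
  ∀ f ∈ I, ∀ n : ℕ, MvPolynomial.homogeneousComponent n f ∈ I

/-- An ideal is saturated with respect to the irrelevant maximal ideal. -/
def IsSatI (I : Ideal (PR K m)) : Prop :=
  ∀ f : PR K m, (∀ i, MvPolynomial.X i * f ∈ I) → f ∈ I

/-- A closed subscheme of `ℙ^m`, given by its saturated homogeneous ideal. -/
structure PSub (K : Type) [Field K] (m : ℕ) where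
  I : Ideal (PR K m)
  homog : IsHomogI I
  sat : IsSatI I

/-- A (closed sub)scheme is zero-dimensional iff the Hilbert function of `R/I` is bounded. -/
def IsZeroDimI (I : Ideal (PR K m)) : Prop := ∃ C, ∀ t, hilbQ I t ≤ C

/-- A polynomial vanishes at a projective point (every homogeneous component vanishes
at a representative). -/
def vanishesAt (f : PR K m) (a : Pm K m) : Prop :=
  ∀ n : ℕ, MvPolynomial.eval a.rep (MvPolynomial.homogeneousComponent n f) = 0

/-- Zero locus of an ideal in `ℙ^m`. -/
def pzeroLocus (I : Ideal (PR K m)) : Set (Pm K m) := {a | ∀ f ∈ I, vanishesAt f a}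

/-- The (saturated) homogeneous ideal of a set of points of `ℙ^m`. -/
def idealOfSet (S : Set (Pm K m)) : Ideal (PR K m) :=
  Ideal.span {f : PR K m | (∃ n, f.IsHomogeneous n) ∧ ∀ a ∈ S, MvPolynomial.eval a.rep f = 0}

/-- Saturation of a homogeneous ideal: the smallest saturated homogeneous ideal containing it. -/
def satIdeal (J : Ideal (PR K m)) : Ideal (PR K m) := sInf {J' | J ≤ J' ∧ IsHomogI J' ∧ IsSatI J'}

/-- The scheme defined by the (saturated) ideal `I` is reduced. -/
def IsReducedI (I : Ideal (PR K m)) : Prop := I = idealOfSet (pzeroLocus I)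

/-- Connected component of a zero-dimensional scheme at a point `a`: the largest subscheme
supported at `a`, i.e. the `a`-primary component. -/
def componentAt (I : Ideal (PR K m)) (a : Pm K m) : Ideal (PR K m) :=
  sInf {J | I ≤ J ∧ IsHomogI J ∧ IsSatI J ∧ pzeroLocus J ⊆ {a}}

/-- Residual scheme of `Z` with respect to the hypersurface `f = 0`: the colon ideal `(I_Z : f)`. -/
def resIdeal (I : Ideal (PR K m)) (f : PR K m) : Ideal (PR K m) :=
  Submodule.colon I (Ideal.span {f})

/-- Degree of the scheme-theoretic intersection of the subschemes defined by `I` and `J`. -/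
def interDeg (I J : Ideal (PR K m)) : ℕ := idealDeg (I ⊔ J)

/-- The degree-`d` Veronese image of a vector `v`: the evaluation-at-`v` functional on
degree-`d` forms. -/
def nu (d : ℕ) (v : Fin (m+1) → K) : Module.Dual K (Hd K m d) :=
  (MvPolynomial.aeval v).toLinearMap ∘ₗ (Hd K m d).subtype

/-- The linear span of the Veronese image `ν_d(S)` of a set `S` of points of `ℙ^m`. -/
def dualSpan (d : ℕ) (S : Set (Pm K m)) : Submodule K (Module.Dual K (Hd K m d)) :=
  Submodule.span K ((fun a => nu d a.rep) '' S)

/-- The linear span `⟨ν_d(Z)⟩` of the Veronese image of the subscheme with ideal `I`: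
the annihilator of the degree-`d` part of `I`. -/
def schemeSpanSub (I : Ideal (PR K m)) (d : ℕ) : Submodule K (Module.Dual K (Hd K m d)) where
  carrier := {φ | ∀ f : Hd K m d, (f : PR K m) ∈ I → φ f = 0}
  add_mem' := by
    intro a b ha hb f hf
    simp [LinearMap.add_apply, ha f hf, hb f hf]
  zero_mem' := by intro f hf; simp
  smul_mem' := by
    intro c a ha f hf
    simp [LinearMap.smul_apply, ha f hf]

/-- `P ∈ ⟨ν_d(Z)⟩`, for `Z` the subscheme with ideal `I`. -/
def inSpanI (I : Ideal (PR K m)) (d : ℕ) (P : PN K m d) : Prop := P.rep ∈ schemeSpanSub I d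

/-- `P ∈ ⟨ν_d(S)⟩` for a set `S` of points of `ℙ^m`. -/
def inSpanSet (d : ℕ) (S : Set (Pm K m)) (P : PN K m d) : Prop := P.rep ∈ dualSpan d S

/-- `L` is a linear subspace of `ℙ^m`. -/
def IsLinearSub (L : Set (Pm K m)) : Prop :=
  ∃ W : Submodule K (Fin (m+1) → K), L = {a | a.submodule ≤ W}

/-- `L` is a line of `ℙ^m`. -/
def IsLine (L : Set (Pm K m)) : Prop :=
  ∃ W : Submodule K (Fin (m+1) → K), Module.finrank K W = 2 ∧ L = {a | a.submodule ≤ W}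

/-- `L` is a plane of `ℙ^m`. -/
def IsPlane (L : Set (Pm K m)) : Prop :=
  ∃ W : Submodule K (Fin (m+1) → K), Module.finrank K W = 3 ∧ L = {a | a.submodule ≤ W}

/-- `J` is the (saturated homogeneous) ideal of a conic of `ℙ^m`: a degree-2 curve contained
in a plane (possibly reducible). -/
def IsConic (J : Ideal (PR K m)) : Prop :=
  ∃ (W : Submodule K (Fin (m+1) → K)) (q : PR K m),
    Module.finrank K W = 3 ∧ q.IsHomogeneous 2 ∧
    q ∉ idealOfSet {a : Pm K m | a.submodule ≤ W} ∧
    J = satIdeal (idealOfSet {a : Pm K m | a.submodule ≤ W} ⊔ Ideal.span {q})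

/-- The algebra of polynomial functions on a `K`-vector space. -/
def polyFunctions (K V : Type) [Field K] [AddCommGroup V] [Module K V] : Subalgebra K (V → K) :=
  Algebra.adjoin K {g : V → K | ∃ φ : V →ₗ[K] K, g = ⇑φ}

/-- Zariski closure of a subset of a projective space. -/
def zClosure {V : Type} [AddCommGroup V] [Module K V] (T : Set (ℙ K V)) : Set (ℙ K V) :=
  {P | ∀ F ∈ polyFunctions K V, (∀ Q ∈ T, ∀ c : K, F (c • Q.rep) = 0) →
    ∀ c : K, F (c • P.rep) = 0}

/-- The Veronese variety `X_{m,d} = ν_d(ℙ^m)` as a subset of `PN K m d`. -/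
def XSet (K : Type) [Field K] (m d : ℕ) : Set (PN K m d) :=
  {Q | ∃ a : Pm K m, Q.submodule = Submodule.span K {nu d a.rep}}

/-- The image `ν_d(S)` of a set of points of `ℙ^m`, as a subset of `PN K m d`. -/
def nuSet (d : ℕ) (S : Set (Pm K m)) : Set (PN K m d) :=
  {Q | ∃ a ∈ S, Q.submodule = Submodule.span K {nu d a.rep}}

/-- The rank of a point `P` of `PN` with respect to a subset `Y ⊆ PN`. -/
def rankWrt {m d : ℕ} (Y : Set (PN K m d)) (P : PN K m d) : ℕ :=
  sInf {r | ∃ S : Finset (PN K m d), ↑S ⊆ Y ∧ S.card = r ∧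
    P.rep ∈ Submodule.span K (Projectivization.rep '' (S : Set (PN K m d)))}

/-- The `s`-th secant variety of `Y ⊆ PN`: the Zariski closure of the union of the spans
of `s` points of `Y`. -/
def secantWrt {m d : ℕ} (Y : Set (PN K m d)) (s : ℕ) : Set (PN K m d) :=
  zClosure {Q | ∃ S : Finset (PN K m d), ↑S ⊆ Y ∧ S.card ≤ s ∧
    Q.rep ∈ Submodule.span K (Projectivization.rep '' (S : Set (PN K m d)))}

/-- The border rank of `P` with respect to `Y ⊆ PN`. -/
def brankWrt {m d : ℕ} (Y : Set (PN K m d)) (P : PN K m d) : ℕ :=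
  sInf {s | 0 < s ∧ P ∈ secantWrt Y s}

/-- Symmetric rank. -/
def srank {m : ℕ} (d : ℕ) (P : PN K m d) : ℕ := rankWrt (XSet K m d) P

/-- Border rank. -/
def brank {m : ℕ} (d : ℕ) (P : PN K m d) : ℕ := brankWrt (XSet K m d) P

/-- Cactus rank: minimal degree of a zero-dimensional closed subscheme `E ⊂ ℙ^m` with
`P ∈ ⟨ν_d(E)⟩`. -/
def crank {m : ℕ} (d : ℕ) (P : PN K m d) : ℕ :=
  sInf {c | ∃ Z : PSub K m, IsZeroDimI Z.I ∧ idealDeg Z.I = c ∧ inSpanI Z.I d P}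

/-- `σ_{s,r}(X_{m,d})`. -/
def sigmaSet (K : Type) [Field K] (m d s r : ℕ) : Set (PN K m d) :=
  {P | brank d P = s ∧ srank d P = r}

/-- A property `Φ` holds for a general `k`-tuple of points of the linear subspace of `ℙ^m`
determined by `W`. -/
def GenerallyOn (W : Submodule K (Fin (m+1) → K)) (k : ℕ)
    (Φ : (Fin k → Pm K m) → Prop) : Prop :=
  ∃ w : Fin 3 → W, Submodule.span K (Set.range fun j => (w j : Fin (m+1) → K)) = W ∧
    ∃ F : MvPolynomial (Fin k × Fin 3) K, F ≠ 0 ∧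
      ∀ c : Fin k → Fin 3 → K,
        MvPolynomial.eval (fun p => c p.1 p.2) F ≠ 0 →
        ∀ e : Fin k → Pm K m,
          (∀ i, (e i).submodule = Submodule.span K {∑ j, c i j • (w j : Fin (m+1) → K)}) → Φ e

end

/-!
On `ℙ¹`, the witness is the functional `φ` taking a binary form of degree `d` to its coefficient of
`x^(d-a) y^a`, where `a = s - 1`.

Its rank is `d - a + 1`. If `φ` lay in the span of at most `d - a` points of the rational normal
curve, a form `G` of degree `d - a` vanishing at those other than `(1 : 0)`, with `G(1, 0) ≠ 0`,
would give the form `y^a G`, killed by all the points but not by `φ`. Conversely, let `f` be a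
separable polynomial of degree `d - a + 1` whose coefficients in degrees `1, …, a` vanish. A
polynomial of degree at most `d` vanishing at the roots of `f` is a multiple `f h` with
`deg h < a`, so its coefficient in degree `a` is zero; hence the roots of `f` span `φ`.

Its border rank is `a + 1`. A divided difference of order `a` of the curve `t ↦ ν_d(1, t)` combines
`a + 1` points and tends to `φ` when the nodes tend to `0`, while the Hankel determinant of size
`a + 1` vanishes on all combinations of `a` points but not at `φ`.

A linear map `p` induces a linear map on functionals which sends `ν_d(v)` to `ν_d(p v)`, hence
increases neither rank nor border rank. For a projection onto a linear subspace `L` this identifies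
the ranks with respect to `ν_d(L)` and `X_{m,d}` on `⟨ν_d(L)⟩`; for an embedding of `ℙ¹` onto a line
it transports `φ` into `ℙ^m`.
-/

open Module MvPolynomial

section SecantCones

variable {K V V' : Type} [Field K] [AddCommGroup V] [Module K V] [AddCommGroup V'] [Module K V']

/-- The Zariski closure of a subset of a vector space: the common zeros of the polynomial functions
vanishing on it. It is the vector-level counterpart of `zClosure`, in which no representatives of
projective points have to be chosen. -/
def zariskiClosure (C : Set V) : Set V :=
  {x | ∀ F ∈ polyFunctions K V, (∀ y ∈ C, F y = 0) → F x = 0}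

/-- The affine cone over the union of the spans of at most `s` points of `Y`. -/
def secantCone (Y : Set (ℙ K V)) (s : ℕ) : Set V :=
  {x | ∃ S : Finset (ℙ K V), ↑S ⊆ Y ∧ S.card ≤ s ∧
    x ∈ Submodule.span K (Projectivization.rep '' (S : Set (ℙ K V)))}

lemma coe_mem_polyFunctions (φ : V →ₗ[K] K) : ⇑φ ∈ polyFunctions K V :=
  Algebra.subset_adjoin ⟨φ, rfl⟩

lemma comp_mem_polyFunctions (f : V →ₗ[K] V') {F : V' → K} (hF : F ∈ polyFunctions K V') :
    F ∘ f ∈ polyFunctions K V := by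
  induction hF using Algebra.adjoin_induction with
  | mem g hg =>
    obtain ⟨φ, rfl⟩ := hg
    exact coe_mem_polyFunctions (φ ∘ₗ f)
  | algebraMap r => exact (polyFunctions K V).algebraMap_mem r
  | add g h _ _ hg hh => exact add_mem hg hh
  | mul g h _ _ hg hh => exact mul_mem hg hh

lemma det_mem_polyFunctions {n : Type} [Fintype n] [DecidableEq n] (f : V →ₗ[K] Matrix n n K) :
    (fun x => (f x).det) ∈ polyFunctions K V := by
  have hsum : (fun x => (f x).det) =
      ∑ σ : Equiv.Perm n, Equiv.Perm.sign σ • ∏ i, fun x => f x (σ i) i := by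
    ext x
    simp only [Matrix.det_apply, Finset.sum_apply, Pi.smul_apply, Finset.prod_apply]
  rw [hsum]
  refine sum_mem fun σ _ => zsmul_mem (prod_mem fun i _ => ?_) _
  exact coe_mem_polyFunctions (Matrix.entryLinearMap K K (σ i) i ∘ₗ f)

lemma zariskiClosure_mono {C D : Set V} (h : C ⊆ D) :
    zariskiClosure (K := K) C ⊆ zariskiClosure (K := K) D :=
  fun _ hx F hF hD => hx F hF fun y hy => hD y (h hy)

lemma map_mem_zariskiClosure (f : V →ₗ[K] V') {C : Set V} {D : Set V'} (h : Set.MapsTo f C D)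
    {x : V} (hx : x ∈ zariskiClosure (K := K) C) : f x ∈ zariskiClosure (K := K) D :=
  fun _ hF hD => hx _ (comp_mem_polyFunctions f hF) fun _ hy => hD _ (h hy)

lemma exists_eval_eq_of_mem_polyFunctions {F : V → K} (hF : F ∈ polyFunctions K V) (n : ℕ)
    (w : ℕ → V) :
    ∃ p : Polynomial K, ∀ t : K, F (∑ i ∈ Finset.range n, t ^ i • w i) = p.eval t := by
  induction hF using Algebra.adjoin_induction with
  | mem g hg =>
    obtain ⟨φ, rfl⟩ := hg
    refine ⟨∑ i ∈ Finset.range n, Polynomial.C (φ (w i)) * Polynomial.X ^ i, fun t => ?_⟩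
    simp only [map_sum, map_smul, smul_eq_mul, mul_comm, Polynomial.eval_finsetSum,
      Polynomial.eval_mul, Polynomial.eval_C, Polynomial.eval_pow, Polynomial.eval_X]
  | algebraMap r => exact ⟨Polynomial.C r, fun t => by simp⟩
  | add g h _ _ hg hh =>
    obtain ⟨p, hp⟩ := hg
    obtain ⟨q, hq⟩ := hh
    exact ⟨p + q, fun t => by simp [hp, hq]⟩
  | mul g h _ _ hg hh =>
    obtain ⟨p, hp⟩ := hg
    obtain ⟨q, hq⟩ := hh
    exact ⟨p * q, fun t => by simp [hp, hq]⟩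

lemma mem_zariskiClosure_of_curve [Infinite K] {C : Set V} (n : ℕ) (w : ℕ → V)
    (h : ∀ t : K, t ≠ 0 → ∑ i ∈ Finset.range (n + 1), t ^ i • w i ∈ C) :
    w 0 ∈ zariskiClosure (K := K) C := by
  intro F hF hC
  obtain ⟨p, hp⟩ := exists_eval_eq_of_mem_polyFunctions hF (n + 1) w
  have hroot : ∀ t : K, t ≠ 0 → p.IsRoot t := fun t ht => by
    rw [Polynomial.IsRoot, ← hp, hC _ (h t ht)]
  have hp0 : p = 0 := Polynomial.eq_zero_of_infinite_isRoot p <|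
    (Set.finite_singleton (0 : K)).infinite_compl.mono hroot
  have hw : ∑ i ∈ Finset.range (n + 1), (0 : K) ^ i • w i = w 0 := by
    simp [Finset.sum_range_succ']
  rw [← hw, hp, hp0, Polynomial.eval_zero]

lemma secantCone_mono {Y : Set (ℙ K V)} : Monotone (secantCone Y) :=
  fun _ _ h _ ⟨S, hSY, hS, hx⟩ => ⟨S, hSY, hS.trans h, hx⟩

lemma smul_mem_secantCone {Y : Set (ℙ K V)} {s : ℕ} (c : K) {x : V} (hx : x ∈ secantCone Y s) :
    c • x ∈ secantCone Y s :=
  let ⟨S, hSY, hS, hx⟩ := hx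
  ⟨S, hSY, hS, Submodule.smul_mem _ c hx⟩

lemma smul_mem_zariskiClosure_secantCone {Y : Set (ℙ K V)} {s : ℕ} (c : K) {x : V}
    (hx : x ∈ zariskiClosure (K := K) (secantCone Y s)) :
    c • x ∈ zariskiClosure (K := K) (secantCone Y s) :=
  map_mem_zariskiClosure (c • LinearMap.id) (fun _ hy => smul_mem_secantCone c hy) hx

lemma rep_mk_mem_iff {C : Set V} (hC : ∀ (c : K) {x : V}, x ∈ C → c • x ∈ C) {x : V} (hx : x ≠ 0) :
    (Projectivization.mk K x hx).rep ∈ C ↔ x ∈ C := by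
  obtain ⟨a, ha⟩ := Projectivization.exists_smul_eq_mk_rep K x hx
  rw [← ha]
  refine ⟨fun h => ?_, fun h => hC a h⟩
  simpa [Units.smul_def, smul_smul] using hC (a⁻¹ : Kˣ) h

-- A polynomial function vanishing at the representatives of the points of a cone need not vanish
-- at `0`; multiplying it by a linear form that is nonzero at the point in question repairs this.
lemma mem_zClosure_iff {C : Set V} (hC : ∀ (c : K) {x : V}, x ∈ C → c • x ∈ C) (P : ℙ K V) :
    P ∈ zClosure {Q : ℙ K V | Q.rep ∈ C} ↔ P.rep ∈ zariskiClosure (K := K) C := by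
  constructor
  · intro hP F hF hFC
    simpa using hP F hF (fun Q hQ c => hFC _ (hC c hQ)) 1
  · intro hP F hF hFC c
    obtain ⟨ψ, hψ⟩ : ∃ ψ : Dual K V, ψ P.rep ≠ 0 := by
      by_contra! h
      exact P.rep_nonzero ((forall_dual_apply_eq_zero_iff K _).1 h)
    have hF' : ⇑ψ * F ∘ (c • LinearMap.id : V →ₗ[K] V) ∈ polyFunctions K V :=
      mul_mem (coe_mem_polyFunctions ψ) (comp_mem_polyFunctions _ hF)
    have hzero : ∀ y ∈ C, (⇑ψ * F ∘ (c • LinearMap.id : V →ₗ[K] V)) y = 0 := by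
      intro y hy
      rcases eq_or_ne y 0 with rfl | hy0
      · simp
      · obtain ⟨a, ha⟩ := Projectivization.exists_smul_eq_mk_rep K y hy0
        have hrep := hFC (.mk K y hy0) ((rep_mk_mem_iff hC hy0).2 hy) (c * (a⁻¹ : Kˣ))
        rw [← ha, Units.smul_def, smul_smul, mul_assoc, Units.inv_mul, mul_one] at hrep
        simp [hrep]
    simpa [hψ] using hP _ hF' hzero

lemma sInf_eq_of_mem_iff {S : Set ℕ} {n : ℕ} (h : ∀ r, r ∈ S ↔ n ≤ r) : sInf S = n := by
  rw [show S = Set.Ici n from Set.ext h, csInf_Ici]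

end SecantCones

section Ranks

variable {K : Type} [Field K] {m d : ℕ}

lemma rankWrt_eq_sInf (Y : Set (PN K m d)) (P : PN K m d) :
    rankWrt Y P = sInf {r | P.rep ∈ secantCone Y r} :=
  csInf_eq_csInf_of_forall_exists_le
    (fun r ⟨S, hSY, hS, hP⟩ => ⟨r, ⟨S, hSY, hS.le, hP⟩, le_rfl⟩)
    (fun _ ⟨S, hSY, hS, hP⟩ => ⟨S.card, ⟨S, hSY, rfl, hP⟩, hS⟩)

lemma brankWrt_eq_sInf (Y : Set (PN K m d)) (P : PN K m d) :
    brankWrt Y P = sInf {s | 0 < s ∧ P.rep ∈ zariskiClosure (K := K) (secantCone Y s)} := by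
  refine congrArg sInf (Set.ext fun s => ?_)
  exact and_congr_right fun _ => mem_zClosure_iff (fun c _ => smul_mem_secantCone c) P

lemma rankWrt_mk_eq {Y : Set (PN K m d)} {x : Dual K (Hd K m d)} (hx : x ≠ 0) {n : ℕ}
    (h : ∀ r, x ∈ secantCone Y r ↔ n ≤ r) : rankWrt Y (.mk K x hx) = n := by
  rw [rankWrt_eq_sInf]
  exact sInf_eq_of_mem_iff fun r =>
    (rep_mk_mem_iff (fun c _ => smul_mem_secantCone c) hx).trans (h r)

lemma brankWrt_mk_eq {Y : Set (PN K m d)} {x : Dual K (Hd K m d)} (hx : x ≠ 0) {n : ℕ} (hn : 0 < n)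
    (h : ∀ r, x ∈ zariskiClosure (K := K) (secantCone Y r) ↔ n ≤ r) :
    brankWrt Y (.mk K x hx) = n := by
  rw [brankWrt_eq_sInf]
  refine sInf_eq_of_mem_iff fun r => ?_
  rw [Set.mem_ofPred_eq,
    rep_mk_mem_iff (fun c _ => smul_mem_zariskiClosure_secantCone c) hx, h r]
  omega

end Ranks

section Veronese

variable {K : Type} [Field K] {m n l d : ℕ}

lemma nu_apply (v : Fin (m + 1) → K) (f : Hd K m d) : nu d v f = eval v (f : PR K m) := by
  simp only [nu, LinearMap.comp_apply, Submodule.subtype_apply, AlgHom.toLinearMap_apply,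
    aeval_eq_eval]

lemma nu_smul (c : K) (v : Fin (m + 1) → K) : nu d (c • v) = c ^ d • nu d v := by
  ext f
  have hf : (f : PR K m).IsHomogeneous d := f.2
  rw [LinearMap.smul_apply, nu_apply, nu_apply, smul_eq_mul, eval_eq, eval_eq, Finset.mul_sum]
  refine Finset.sum_congr rfl fun n hn => ?_
  have hn : ∑ i ∈ n.support, n i = d := by
    rw [← hf (mem_support_iff.1 hn), Finsupp.weight_apply, Finsupp.sum]
    simp
  simp only [Pi.smul_apply, smul_eq_mul, mul_pow, Finset.prod_mul_distrib,
    Finset.prod_pow_eq_pow_sum, hn]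
  ring

lemma nu_zero (hd : d ≠ 0) : nu d (0 : Fin (m + 1) → K) = 0 := by
  rw [← zero_smul K (0 : Fin (m + 1) → K), nu_smul, zero_pow hd, zero_smul]

lemma nu_ne_zero {v : Fin (m + 1) → K} (hv : v ≠ 0) : nu d v ≠ 0 := by
  obtain ⟨i, hi⟩ := Function.ne_iff.1 hv
  intro h
  have hX : nu d v ⟨X i ^ d, by simpa using (isHomogeneous_X K i).pow d⟩ = 0 := by
    rw [h, LinearMap.zero_apply]
  rw [nu_apply, map_pow, eval_X] at hX
  exact pow_ne_zero d hi hX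

/-- The points of the linear subspace of `ℙ^m` defined by a subspace `W` of `K^(m+1)`. -/
def linearLocus (W : Submodule K (Fin (m + 1) → K)) : Set (Pm K m) := {a | a.submodule ≤ W}

lemma mem_linearLocus_iff {W : Submodule K (Fin (m + 1) → K)} {a : Pm K m} :
    a ∈ linearLocus W ↔ a.rep ∈ W := by
  rw [linearLocus, Set.mem_ofPred_eq, Projectivization.submodule_eq,
    Submodule.span_singleton_le_iff_mem]

lemma mk_mem_linearLocus {W : Submodule K (Fin (m + 1) → K)} {v : Fin (m + 1) → K} (hv : v ∈ W)
    (hv0 : v ≠ 0) : Projectivization.mk K v hv0 ∈ linearLocus W :=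
  mem_linearLocus_iff.2 ((rep_mk_mem_iff (fun c _ h => W.smul_mem c h) hv0).2 hv)

lemma XSet_eq_nuSet : XSet K m d = nuSet d (linearLocus ⊤) := by
  simp [XSet, nuSet, linearLocus]

lemma span_nu_rep_mk {v : Fin (m + 1) → K} (hv : v ≠ 0) :
    Submodule.span K {nu d (Projectivization.mk K v hv).rep} = Submodule.span K {nu d v} := by
  obtain ⟨a, ha⟩ := Projectivization.exists_smul_eq_mk_rep K v hv
  rw [← ha, Units.smul_def, nu_smul]
  exact Submodule.span_singleton_smul_eq (a.isUnit.pow d) _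

lemma nu_mem_dualSpan {W : Submodule K (Fin (m + 1) → K)} (hd : d ≠ 0) {v : Fin (m + 1) → K}
    (hv : v ∈ W) : nu d v ∈ dualSpan d (linearLocus W) := by
  rcases eq_or_ne v 0 with rfl | hv0
  · rw [nu_zero hd]
    exact zero_mem _
  · rw [← Submodule.span_singleton_le_iff_mem, ← span_nu_rep_mk hv0,
      Submodule.span_singleton_le_iff_mem]
    exact Submodule.subset_span ⟨_, mk_mem_linearLocus hv hv0, rfl⟩

lemma exists_mem_nuSet_nu_mem_span {W : Submodule K (Fin (m + 1) → K)} {v : Fin (m + 1) → K}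
    (hv : v ∈ W) (hv0 : v ≠ 0) :
    ∃ Q ∈ nuSet d (linearLocus W), nu d v ∈ Submodule.span K {Q.rep} := by
  refine ⟨.mk K (nu d v) (nu_ne_zero hv0), ⟨.mk K v hv0, mk_mem_linearLocus hv hv0, ?_⟩, ?_⟩
  · rw [span_nu_rep_mk, Projectivization.submodule_mk]
  · rw [← Projectivization.submodule_eq, Projectivization.submodule_mk]
    exact Submodule.mem_span_singleton_self _

lemma exists_rep_mem_span_nu {W : Submodule K (Fin (m + 1) → K)} {Q : PN K m d}
    (hQ : Q ∈ nuSet d (linearLocus W)) : ∃ v ∈ W, Q.rep ∈ Submodule.span K {nu d v} := by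
  obtain ⟨a, ha, hQa⟩ := hQ
  refine ⟨a.rep, mem_linearLocus_iff.1 ha, ?_⟩
  rw [← hQa, Projectivization.submodule_eq]
  exact Submodule.mem_span_singleton_self _

lemma mem_secantCone_nuSet_iff (hd : d ≠ 0) {W : Submodule K (Fin (m + 1) → K)} {s : ℕ}
    {x : Dual K (Hd K m d)} :
    x ∈ secantCone (nuSet d (linearLocus W)) s ↔
      ∃ T : Finset (Fin (m + 1) → K), (T : Set (Fin (m + 1) → K)) ⊆ W ∧ T.card ≤ s ∧
        x ∈ Submodule.span K (nu d '' T) := by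
  classical
  constructor
  · rintro ⟨S, hSY, hS, hx⟩
    choose! v hvW hv using fun Q (hQ : Q ∈ nuSet d (linearLocus W)) => exists_rep_mem_span_nu hQ
    refine ⟨S.image v, ?_, Finset.card_image_le.trans hS, Submodule.span_le.2 ?_ hx⟩
    · rw [Finset.coe_image, Set.image_subset_iff]
      exact fun Q hQ => hvW Q (hSY hQ)
    · rintro _ ⟨Q, hQ, rfl⟩
      refine Submodule.span_mono ?_ (hv Q (hSY hQ))
      exact Set.singleton_subset_iff.2 ⟨v Q, Finset.mem_image_of_mem v hQ, rfl⟩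
  · rintro ⟨T, hTW, hT, hx⟩
    have : Nonempty (PN K m d) := ⟨.mk K (nu d 1) (nu_ne_zero one_ne_zero)⟩
    have hpoint : ∀ v, v ∈ W ∧ v ≠ 0 →
        ∃ Q ∈ nuSet d (linearLocus W), nu d v ∈ Submodule.span K {Q.rep} :=
      fun v hv => exists_mem_nuSet_nu_mem_span hv.1 hv.2
    choose! Q hQ hv using hpoint
    refine ⟨{v ∈ T | v ≠ 0}.image Q, ?_,
      Finset.card_image_le.trans ((Finset.card_filter_le _ _).trans hT),
      Submodule.span_le.2 ?_ hx⟩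
    · rw [Finset.coe_image, Set.image_subset_iff]
      intro v hvT
      obtain ⟨hvT, hv0⟩ := Finset.mem_filter.1 hvT
      exact hQ v ⟨hTW hvT, hv0⟩
    · rintro _ ⟨v, hvT, rfl⟩
      rcases eq_or_ne v 0 with rfl | hv0
      · simp [nu_zero hd]
      · refine Submodule.span_mono ?_ (hv v ⟨hTW hvT, hv0⟩)
        exact Set.singleton_subset_iff.2
          ⟨Q v, Finset.mem_image_of_mem Q (Finset.mem_filter.2 ⟨hvT, hv0⟩), rfl⟩

lemma dualSpan_linearLocus_le (W : Submodule K (Fin (m + 1) → K)) :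
    dualSpan d (linearLocus W) ≤ Submodule.span K (nu d '' W) :=
  Submodule.span_mono (Set.image_subset_iff.2 fun a ha => ⟨a.rep, mem_linearLocus_iff.1 ha, rfl⟩)

/-- The linear map of functionals on degree-`d` forms sending `nu d v` to `nu d (p v)`, namely the
transpose of the substitution of the coordinates of `p` into forms. -/
noncomputable def veroneseMap (d : ℕ) (p : (Fin (m + 1) → K) →ₗ[K] (Fin (n + 1) → K)) :
    Dual K (Hd K m d) →ₗ[K] Dual K (Hd K n d) :=
  Dual.transpose <|
    (aeval p.toMatrix'.toMvPolynomial : PR K n →ₐ[K] PR K m).toLinearMap.restrict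
      (p := Hd K n d) (q := Hd K m d) fun f hf => by
        simpa using IsHomogeneous.aeval hf _ fun i => p.toMatrix'.toMvPolynomial_isHomogeneous i

lemma veroneseMap_nu (p : (Fin (m + 1) → K) →ₗ[K] (Fin (n + 1) → K)) (v : Fin (m + 1) → K) :
    veroneseMap d p (nu d v) = nu d (p v) := by
  ext f
  have hp : ∀ i, aeval v (p.toMatrix'.toMvPolynomial i) = p v i := fun i => by
    rw [aeval_eq_eval, Matrix.toMvPolynomial_eval_eq_apply, LinearMap.toMatrix'_mulVec]
  calc veroneseMap d p (nu d v) f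
      = aeval v (aeval p.toMatrix'.toMvPolynomial (f : PR K n)) := rfl
    _ = aeval (fun i => aeval v (p.toMatrix'.toMvPolynomial i)) (f : PR K n) :=
        comp_aeval_apply _ _ _
    _ = nu d (p v) f := by rw [funext hp]; rfl

variable {W : Submodule K (Fin (m + 1) → K)} {W' : Submodule K (Fin (n + 1) → K)}
  {p : (Fin (m + 1) → K) →ₗ[K] (Fin (n + 1) → K)} {s : ℕ}

lemma veroneseMap_mem_secantCone (hd : d ≠ 0) (hp : W ≤ W'.comap p) {x : Dual K (Hd K m d)}
    (hx : x ∈ secantCone (nuSet d (linearLocus W)) s) :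
    veroneseMap d p x ∈ secantCone (nuSet d (linearLocus W')) s := by
  classical
  rw [mem_secantCone_nuSet_iff hd] at hx ⊢
  obtain ⟨T, hTW, hT, hx⟩ := hx
  refine ⟨T.image p, ?_, Finset.card_image_le.trans hT, ?_⟩
  · rw [Finset.coe_image, Set.image_subset_iff]
    exact fun v hv => hp (hTW hv)
  · have himage : nu d '' ↑(T.image p) = veroneseMap d p '' (nu d '' T) := by
      simp only [Finset.coe_image, Set.image_image, veroneseMap_nu]
    rw [himage, Submodule.span_image]
    exact Submodule.mem_map_of_mem hx

lemma mem_secantCone_iff_of_veroneseMap_eq (hd : d ≠ 0)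
    {q : (Fin (n + 1) → K) →ₗ[K] (Fin (m + 1) → K)} (hp : W ≤ W'.comap p) (hq : W' ≤ W.comap q)
    {x : Dual K (Hd K m d)} {y : Dual K (Hd K n d)} (hxy : veroneseMap d p x = y)
    (hyx : veroneseMap d q y = x) :
    y ∈ secantCone (nuSet d (linearLocus W')) s ↔ x ∈ secantCone (nuSet d (linearLocus W)) s :=
  ⟨fun h => hyx ▸ veroneseMap_mem_secantCone hd hq h,
    fun h => hxy ▸ veroneseMap_mem_secantCone hd hp h⟩

lemma mem_zariskiClosure_secantCone_iff_of_veroneseMap_eq (hd : d ≠ 0)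
    {q : (Fin (n + 1) → K) →ₗ[K] (Fin (m + 1) → K)} (hp : W ≤ W'.comap p) (hq : W' ≤ W.comap q)
    {x : Dual K (Hd K m d)} {y : Dual K (Hd K n d)} (hxy : veroneseMap d p x = y)
    (hyx : veroneseMap d q y = x) :
    y ∈ zariskiClosure (K := K) (secantCone (nuSet d (linearLocus W')) s) ↔
      x ∈ zariskiClosure (K := K) (secantCone (nuSet d (linearLocus W)) s) :=
  ⟨fun h => hyx ▸ map_mem_zariskiClosure _ (fun _ => veroneseMap_mem_secantCone hd hq) h,
    fun h => hxy ▸ map_mem_zariskiClosure _ (fun _ => veroneseMap_mem_secantCone hd hp) h⟩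

lemma veroneseMap_eq_self {p : (Fin (m + 1) → K) →ₗ[K] (Fin (m + 1) → K)}
    (hp : ∀ v ∈ W, p v = v) {x : Dual K (Hd K m d)} (hx : x ∈ Submodule.span K (nu d '' W)) :
    veroneseMap d p x = x := by
  refine LinearMap.eqOn_span (f := veroneseMap d p) (g := .id) ?_ hx
  rintro _ ⟨v, hv, rfl⟩
  rw [veroneseMap_nu, hp v hv, LinearMap.id_apply]

lemma veroneseMap_comp_apply {q : (Fin (n + 1) → K) →ₗ[K] (Fin (l + 1) → K)}
    (x : Dual K (Hd K m d)) : veroneseMap d (q ∘ₗ p) x = veroneseMap d q (veroneseMap d p x) := by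
  have hsubst : ∀ i, (q ∘ₗ p).toMatrix'.toMvPolynomial i =
      aeval p.toMatrix'.toMvPolynomial (q.toMatrix'.toMvPolynomial i) := fun i => by
    rw [LinearMap.toMatrix'_comp, Matrix.toMvPolynomial_mul, aeval_eq_bind₁]
  ext f
  refine congrArg x (Subtype.ext ?_)
  calc aeval (q ∘ₗ p).toMatrix'.toMvPolynomial (f : PR K l)
      = aeval (fun i => aeval p.toMatrix'.toMvPolynomial (q.toMatrix'.toMvPolynomial i))
          (f : PR K l) := by rw [funext hsubst]
    _ = aeval p.toMatrix'.toMvPolynomial (aeval q.toMatrix'.toMvPolynomial (f : PR K l)) :=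
        (comp_aeval_apply _ _ _).symm

end Veronese

section LinearSubspaces

variable {K : Type} [Field K] {m d : ℕ}

lemma exists_veroneseMap_retraction (d : ℕ) (W : Submodule K (Fin (m + 1) → K)) :
    ∃ r : (Fin (m + 1) → K) →ₗ[K] (Fin (m + 1) → K), ⊤ ≤ W.comap r ∧
      ∀ x ∈ dualSpan d (linearLocus W), veroneseMap d r x = x := by
  obtain ⟨r, hr⟩ := W.subtype.exists_leftInverse_of_injective W.ker_subtype
  refine ⟨W.subtype ∘ₗ r, fun v _ => (r v).2, fun x hx => ?_⟩
  exact veroneseMap_eq_self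
    (fun v hv => congrArg Subtype.val (LinearMap.congr_fun hr ⟨v, hv⟩))
    (dualSpan_linearLocus_le W hx)

lemma mem_secantCone_XSet_iff (hd : d ≠ 0) {W : Submodule K (Fin (m + 1) → K)} {s : ℕ}
    {x : Dual K (Hd K m d)} (hx : x ∈ dualSpan d (linearLocus W)) :
    x ∈ secantCone (XSet K m d) s ↔ x ∈ secantCone (nuSet d (linearLocus W)) s := by
  obtain ⟨r, hrW, hr⟩ := exists_veroneseMap_retraction d W
  rw [XSet_eq_nuSet]
  exact mem_secantCone_iff_of_veroneseMap_eq (p := .id) hd le_top hrW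
    (veroneseMap_eq_self (fun _ _ => rfl) (dualSpan_linearLocus_le W hx)) (hr x hx)

lemma mem_zariskiClosure_secantCone_XSet_iff (hd : d ≠ 0) {W : Submodule K (Fin (m + 1) → K)}
    {s : ℕ} {x : Dual K (Hd K m d)} (hx : x ∈ dualSpan d (linearLocus W)) :
    x ∈ zariskiClosure (K := K) (secantCone (XSet K m d) s) ↔
      x ∈ zariskiClosure (K := K) (secantCone (nuSet d (linearLocus W)) s) := by
  obtain ⟨r, hrW, hr⟩ := exists_veroneseMap_retraction d W
  rw [XSet_eq_nuSet]
  exact mem_zariskiClosure_secantCone_iff_of_veroneseMap_eq (p := .id) hd le_top hrW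
    (veroneseMap_eq_self (fun _ _ => rfl) (dualSpan_linearLocus_le W hx)) (hr x hx)

theorem rankWrt_XSet_eq_rankWrt_nuSet (hd : d ≠ 0) {L : Set (Pm K m)} (hL : IsLinearSub L)
    {P : PN K m d} (hP : inSpanSet d L P) :
    rankWrt (XSet K m d) P = rankWrt (nuSet d L) P := by
  obtain ⟨W, rfl⟩ := hL
  simp only [rankWrt_eq_sInf, mem_secantCone_XSet_iff hd hP]
  rfl

theorem brankWrt_XSet_eq_brankWrt_nuSet (hd : d ≠ 0) {L : Set (Pm K m)} (hL : IsLinearSub L)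
    {P : PN K m d} (hP : inSpanSet d L P) :
    brankWrt (XSet K m d) P = brankWrt (nuSet d L) P := by
  obtain ⟨W, rfl⟩ := hL
  simp only [brankWrt_eq_sInf, mem_zariskiClosure_secantCone_XSet_iff hd hP]
  rfl

end LinearSubspaces

section BinaryForms

variable {K : Type} [Field K] {d : ℕ}

/-- The dehomogenization `f(x, y) ↦ f(1, y)` of binary forms. -/
noncomputable def dehomogenize : PR K 1 →ₐ[K] Polynomial K := aeval ![1, Polynomial.X]

lemma natDegree_dehomogenize_le (f : Hd K 1 d) : (dehomogenize (f : PR K 1)).natDegree ≤ d := by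
  have hf : (f : PR K 1).IsHomogeneous d := f.2
  refine (aeval_natDegree_le (f : PR K 1) hf.totalDegree_le (n := 1) _ ?_).trans_eq (mul_one d)
  simp [Fin.forall_fin_two]

lemma eval_dehomogenize (f : PR K 1) (t : K) : (dehomogenize f).eval t = eval ![1, t] f := by
  rw [← Polynomial.coe_aeval_eq_eval, ← aeval_eq_eval]
  have h : (Polynomial.aeval t).comp (dehomogenize : PR K 1 →ₐ[K] Polynomial K) =
      aeval ![1, t] := by
    ext i
    fin_cases i <;> simp [dehomogenize]
  exact DFunLike.congr_fun h f

/-- The functional taking a binary form of degree `d` to its coefficient of `x^(d-j) y^j`. -/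
noncomputable def binaryCoeff (K : Type) [Field K] (d j : ℕ) : Dual K (Hd K 1 d) :=
  Polynomial.lcoeff K j ∘ₗ dehomogenize.toLinearMap ∘ₗ (Hd K 1 d).subtype

lemma binaryCoeff_apply (j : ℕ) (f : Hd K 1 d) :
    binaryCoeff K d j f = (dehomogenize (f : PR K 1)).coeff j := rfl

lemma nu_eq_sum_binaryCoeff (t : K) :
    nu d ![1, t] = ∑ j ∈ Finset.range (d + 1), t ^ j • binaryCoeff K d j := by
  ext f
  rw [nu_apply, ← eval_dehomogenize,
    Polynomial.eval_eq_sum_range' (Nat.lt_succ_of_le (natDegree_dehomogenize_le f))]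
  simp [binaryCoeff_apply, LinearMap.sum_apply, mul_comm]

/-- The monomial `x^(d-k) y^k`. -/
noncomputable def binaryMonomial (K : Type) [Field K] (d : ℕ) (k : Fin (d + 1)) : Hd K 1 d :=
  ⟨X 0 ^ (d - k : ℕ) * X 1 ^ (k : ℕ), by
    have h := ((isHomogeneous_X K (0 : Fin (1 + 1))).pow (d - k)).mul
      ((isHomogeneous_X K (1 : Fin (1 + 1))).pow k)
    rwa [one_mul, one_mul, Nat.sub_add_cancel (Nat.le_of_lt_succ k.2)] at h⟩

lemma nu_binaryMonomial (v : Fin (1 + 1) → K) (k : Fin (d + 1)) :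
    nu d v (binaryMonomial K d k) = v 0 ^ (d - k : ℕ) * v 1 ^ (k : ℕ) := by
  simp [nu_apply, binaryMonomial]

lemma binaryCoeff_binaryMonomial (j : ℕ) (k : Fin (d + 1)) :
    binaryCoeff K d j (binaryMonomial K d k) = if j = k then 1 else 0 := by
  simp [binaryCoeff_apply, binaryMonomial, dehomogenize, Polynomial.coeff_X_pow]

lemma binaryCoeff_ne_zero {a : ℕ} (ha : a ≤ d) : binaryCoeff K d a ≠ 0 := fun h => by
  have hone := binaryCoeff_binaryMonomial (K := K) a (⟨a, Nat.lt_succ_of_le ha⟩ : Fin (d + 1))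
  simp [h] at hone

-- If the characteristic divides `N`, then `X^N - 1` is inseparable, but `X^N + X^(N-1) - 1` has
-- derivative `-X^(N-2)`.
lemma exists_separable_coeff_eq_zero (K : Type) [Field K] {a N : ℕ} (hN : a + 2 ≤ N) :
    ∃ f : Polynomial K, f.Separable ∧ f.natDegree = N ∧ ∀ i, 0 < i → i ≤ a → f.coeff i = 0 := by
  obtain ⟨n, rfl⟩ : ∃ n, N = n + 2 := ⟨N - 2, by omega⟩
  by_cases h : ((n + 2 : ℕ) : K) = 0
  · refine ⟨.X ^ (n + 2) + .X ^ (n + 1) - .C 1, ?_, by compute_degree!, fun i hi hia => ?_⟩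
    · have hn : ((n + 1 : ℕ) : K) = -1 := by
        push_cast at h ⊢
        linear_combination h
      have hderiv : Polynomial.derivative (.X ^ (n + 2) + .X ^ (n + 1) - .C 1 : Polynomial K) =
          -.X ^ n := by
        rw [Polynomial.derivative_sub, Polynomial.derivative_add, Polynomial.derivative_X_pow,
          Polynomial.derivative_X_pow, Polynomial.derivative_C, h, hn]
        simp
      rw [Polynomial.separable_def', hderiv, map_one]
      exact ⟨-1, -(.X ^ 2 + .X), by ring⟩
    · rw [Polynomial.coeff_sub, Polynomial.coeff_add, Polynomial.coeff_X_pow,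
        Polynomial.coeff_X_pow, Polynomial.coeff_C, if_neg (by omega), if_neg (by omega),
        if_neg hi.ne', add_zero, sub_zero]
  · refine ⟨_, Polynomial.separable_X_pow_sub_C (1 : K) h one_ne_zero,
      Polynomial.natDegree_X_pow_sub_C, fun i hi hia => ?_⟩
    rw [Polynomial.coeff_sub, Polynomial.coeff_X_pow, Polynomial.coeff_C, if_neg (by omega),
      if_neg hi.ne', sub_zero]

lemma dvd_of_separable_of_forall_isRoot [IsAlgClosed K] {f g : Polynomial K} (hf : f.Separable)
    (h : ∀ t ∈ f.roots, g.IsRoot t) : f ∣ g := by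
  rcases eq_or_ne g 0 with rfl | hg
  · exact dvd_zero f
  · rw [IsAlgClosed.dvd_iff_roots_le_roots hf.ne_zero hg,
      Multiset.le_iff_subset (Polynomial.nodup_roots hf)]
    exact fun t ht => (Polynomial.mem_roots hg).2 (h t ht)

lemma coeff_mul_eq_zero {f h : Polynomial K} {a : ℕ} (hf : ∀ i, 0 < i → i ≤ a → f.coeff i = 0)
    (hh : h.natDegree < a) : (f * h).coeff a = 0 := by
  rw [Polynomial.coeff_mul]
  refine Finset.sum_eq_zero fun ij hij => ?_
  rw [Finset.HasAntidiagonal.mem_antidiagonal] at hij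
  rcases Nat.eq_zero_or_pos ij.1 with hi | hi
  · rw [Polynomial.coeff_eq_zero_of_natDegree_lt (by omega : h.natDegree < ij.2), mul_zero]
  · rw [hf _ hi (by omega), zero_mul]

lemma binaryCoeff_mem_span_nu_roots [IsAlgClosed K] [DecidableEq K] {a : ℕ} {f : Polynomial K}
    (hf : f.Separable) (hdeg : d < f.natDegree + a)
    (hcoeff : ∀ i, 0 < i → i ≤ a → f.coeff i = 0) :
    binaryCoeff K d a ∈ Submodule.span K ((fun t => nu d ![1, t]) '' f.roots.toFinset) := by
  rw [Set.image_eq_range]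
  refine mem_span_of_iInf_ker_le_ker fun g hg => ?_
  have hroot : ∀ t ∈ f.roots, (dehomogenize (g : PR K 1)).IsRoot t := fun t ht => by
    have hgt := (Submodule.mem_iInf _).1 hg ⟨t, Multiset.mem_toFinset.2 ht⟩
    rwa [LinearMap.mem_ker, nu_apply, ← eval_dehomogenize] at hgt
  obtain ⟨h, hgh⟩ := dvd_of_separable_of_forall_isRoot hf hroot
  rw [LinearMap.mem_ker, binaryCoeff_apply, hgh]
  rcases eq_or_ne h 0 with rfl | hh
  · simp
  · refine coeff_mul_eq_zero hcoeff ?_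
    have hle := natDegree_dehomogenize_le g
    rw [hgh, Polynomial.natDegree_mul hf.ne_zero hh] at hle
    omega

theorem exists_binaryCoeff_mem_span_nu [IsAlgClosed K] {a : ℕ} (ha : 2 * a < d) :
    ∃ T : Finset (Fin (1 + 1) → K), T.card ≤ d - a + 1 ∧
      binaryCoeff K d a ∈ Submodule.span K (nu d '' T) := by
  classical
  obtain ⟨f, hf, hdeg, hcoeff⟩ :=
    exists_separable_coeff_eq_zero K (by omega : a + 2 ≤ d - a + 1)
  refine ⟨f.roots.toFinset.image fun t => ![1, t], ?_, ?_⟩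
  · exact Finset.card_image_le.trans
      ((Multiset.toFinset_card_le _).trans (hdeg ▸ f.card_roots'))
  · rw [Finset.coe_image, Set.image_image]
    exact binaryCoeff_mem_span_nu_roots hf (by omega) hcoeff

lemma exists_isHomogeneous_vanishing {T : Finset (Fin (1 + 1) → K)} {n : ℕ} (hT : T.card ≤ n)
    (hT1 : ∀ v ∈ T, v 1 ≠ 0) :
    ∃ G : PR K 1, G.IsHomogeneous n ∧ (∀ v ∈ T, eval v G = 0) ∧ eval ![1, 0] G ≠ 0 := by
  refine ⟨X 0 ^ (n - T.card) * ∏ v ∈ T, (C (v 1) * X 0 - C (v 0) * X 1), ?_, fun v hv => ?_, ?_⟩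
  · have hprod : (∏ v ∈ T, (C (v 1) * X 0 - C (v 0) * X 1) : PR K 1).IsHomogeneous T.card := by
      simpa using IsHomogeneous.prod T _ (fun _ => 1) fun v _ =>
        (isHomogeneous_C_mul_X (v 1) 0).sub (isHomogeneous_C_mul_X (v 0) 1)
    simpa [Nat.sub_add_cancel hT] using
      (isHomogeneous_X_pow (0 : Fin (1 + 1)) (n - T.card)).mul hprod
  · rw [map_mul, map_prod, Finset.prod_eq_zero hv (by simp [mul_comm]), mul_zero]
  · simpa [Finset.prod_eq_zero_iff] using hT1

theorem lt_card_of_binaryCoeff_mem_span_nu {a : ℕ} (ha : a ≠ 0) (had : a ≤ d)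
    {T : Finset (Fin (1 + 1) → K)}
    (h : binaryCoeff K d a ∈ Submodule.span K (nu d '' T)) : d - a < T.card := by
  classical
  by_contra! hT
  obtain ⟨G, hG, hGT, hG0⟩ := exists_isHomogeneous_vanishing (T := {v ∈ T | v 1 ≠ 0})
    ((Finset.card_filter_le _ _).trans hT) fun v hv => (Finset.mem_filter.1 hv).2
  let f : Hd K 1 d := ⟨X 1 ^ a * G, by
    simpa [Nat.add_sub_of_le had] using (isHomogeneous_X_pow (1 : Fin (1 + 1)) a).mul hG⟩
  have hvanish : ∀ φ ∈ Submodule.span K (nu d '' T), φ f = 0 := by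
    intro φ hφ
    refine LinearMap.eqOn_span (f := Dual.eval K _ f) (g := 0) ?_ hφ
    rintro _ ⟨v, hv, rfl⟩
    rcases eq_or_ne (v 1) 0 with hv1 | hv1
    · simp [nu_apply, f, hv1, ha]
    · simp [nu_apply, f, hGT v (Finset.mem_filter.2 ⟨hv, hv1⟩)]
  refine hG0 ?_
  calc eval ![1, 0] G = (dehomogenize G).coeff 0 := by
        rw [← eval_dehomogenize, Polynomial.coeff_zero_eq_eval_zero]
    _ = binaryCoeff K d a f := by
        simp [binaryCoeff_apply, f, dehomogenize, Polynomial.coeff_X_pow_mul']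
    _ = 0 := hvanish _ h

-- These are the weights of the divided difference of order `a`.
lemma exists_divided_difference_weights (K : Type) [Field K] [Infinite K] (a : ℕ) :
    ∃ (S : Finset K) (c : K → K), S.card = a + 1 ∧
      ∀ j ≤ a, ∑ x ∈ S, c x * x ^ j = if a = j then 1 else 0 := by
  classical
  obtain ⟨S, hS⟩ := Infinite.exists_subset_card_eq K (a + 1)
  refine ⟨S, fun x => (∏ y ∈ S.erase x, (x - y))⁻¹, hS, fun j hj => ?_⟩
  have hdeg : (Polynomial.X ^ j : Polynomial K).degree < S.card := by
    rw [Polynomial.degree_X_pow, hS]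
    exact_mod_cast Nat.lt_succ_of_le hj
  have hcoeff := Lagrange.coeff_eq_sum (Set.injOn_id (S : Set K)) hdeg
  simpa [hS, Polynomial.coeff_X_pow, div_eq_inv_mul] using hcoeff.symm

lemma sum_smul_nu (S : Finset K) (c : K → K) (t : K) :
    ∑ x ∈ S, c x • nu d ![1, t * x] =
      ∑ j ∈ Finset.range (d + 1), t ^ j • (∑ x ∈ S, c x * x ^ j) • binaryCoeff K d j := by
  simp only [nu_eq_sum_binaryCoeff, Finset.smul_sum, Finset.sum_smul, smul_smul]
  rw [Finset.sum_comm]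
  refine Finset.sum_congr rfl fun j _ => Finset.sum_congr rfl fun x _ => ?_
  rw [mul_pow, mul_left_comm]

theorem binaryCoeff_mem_zariskiClosure_secantCone [Infinite K] (hd : d ≠ 0) {a : ℕ} (had : a ≤ d) :
    binaryCoeff K d a ∈ zariskiClosure (K := K) (secantCone (XSet K 1 d) (a + 1)) := by
  classical
  obtain ⟨S, c, hS, hc⟩ := exists_divided_difference_weights K a
  let w : ℕ → Dual K (Hd K 1 d) := fun i =>
    (∑ x ∈ S, c x * x ^ (a + i)) • binaryCoeff K d (a + i)
  have hcurve : ∀ t : K, t ≠ 0 → ∑ i ∈ Finset.range (d - a + 1), t ^ i • w i =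
      (t ^ a)⁻¹ • ∑ x ∈ S, c x • nu d ![1, t * x] := by
    intro t ht
    have hlow : ∀ j ∈ Finset.range a,
        t ^ j • (∑ x ∈ S, c x * x ^ j) • binaryCoeff K d j = 0 := fun j hj => by
      have hja := Finset.mem_range.1 hj
      rw [hc j hja.le, if_neg hja.ne', zero_smul, smul_zero]
    rw [eq_inv_smul_iff₀ (pow_ne_zero a ht), sum_smul_nu,
      show d + 1 = a + (d - a + 1) by omega, Finset.sum_range_add _ a, Finset.sum_eq_zero hlow,
      zero_add, Finset.smul_sum]
    exact Finset.sum_congr rfl fun i _ => by rw [smul_smul, pow_add]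
  have hw : w 0 = binaryCoeff K d a := by simp [w, hc a le_rfl]
  rw [← hw, XSet_eq_nuSet]
  refine mem_zariskiClosure_of_curve (d - a) w fun t ht => ?_
  rw [hcurve t ht, mem_secantCone_nuSet_iff hd]
  refine ⟨S.image fun x => ![1, t * x], fun _ _ => trivial, Finset.card_image_le.trans_eq hS,
    Submodule.smul_mem _ _ (sum_mem fun x hx => Submodule.smul_mem _ _ ?_)⟩
  exact Submodule.subset_span ⟨_, Finset.mem_image_of_mem _ hx, rfl⟩

/-- The Hankel matrix (the middle catalecticant) of a functional on binary forms. -/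
noncomputable def hankel {a : ℕ} (ha : 2 * a ≤ d) :
    Dual K (Hd K 1 d) →ₗ[K] Matrix (Fin (a + 1)) (Fin (a + 1)) K where
  toFun φ := .of fun i j => φ (binaryMonomial K d ⟨i + j, by omega⟩)
  map_add' _ _ := rfl
  map_smul' _ _ := rfl

lemma hankel_apply {a : ℕ} (ha : 2 * a ≤ d) (φ : Dual K (Hd K 1 d)) (i j : Fin (a + 1)) :
    hankel ha φ i j = φ (binaryMonomial K d ⟨i + j, by omega⟩) := rfl

lemma det_hankel_eq_zero {a : ℕ} (ha : 2 * a ≤ d) {T : Finset (Fin (1 + 1) → K)}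
    (hT : T.card ≤ a) {φ : Dual K (Hd K 1 d)} (hφ : φ ∈ Submodule.span K (nu d '' T)) :
    (hankel ha φ).det = 0 := by
  obtain ⟨c, rfl⟩ := (Submodule.mem_span_image_finset_iff_exists_fun K).1 hφ
  let A : Matrix (Fin (a + 1)) T K :=
    .of fun i v => c v * (v.1 0 ^ (d - a - i : ℕ) * v.1 1 ^ (i : ℕ))
  let B : Matrix T (Fin (a + 1)) K := .of fun v j => v.1 0 ^ (a - j : ℕ) * v.1 1 ^ (j : ℕ)
  have hAB : hankel ha (∑ v : T, c v • nu d v) = A * B := by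
    ext i j
    have hexp : d - (i + j) = (d - a - i) + (a - j) := by omega
    simp only [hankel_apply, Matrix.mul_apply, LinearMap.sum_apply, LinearMap.smul_apply,
      nu_binaryMonomial, smul_eq_mul, A, B, Matrix.of_apply, hexp, pow_add]
    exact Finset.sum_congr rfl fun v _ => by ring
  by_contra hdet
  have hrank := (A.rank_mul_le_left B).trans A.rank_le_card_width
  rw [← hAB, Matrix.rank_of_det_ne_zero hdet, Fintype.card_fin, Fintype.card_coe] at hrank
  omega

lemma det_hankel_binaryCoeff_ne_zero {a : ℕ} (ha : 2 * a ≤ d) :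
    (hankel ha (binaryCoeff K d a)).det ≠ 0 := by
  have hperm : hankel ha (binaryCoeff K d a) = (Fin.revPerm (n := a + 1)).permMatrix K := by
    ext i j
    have hij : a = i + j ↔ i.rev = j := by
      rw [Fin.ext_iff, Fin.val_rev]
      omega
    simp [hankel_apply, binaryCoeff_binaryMonomial, PEquiv.toMatrix_apply, hij]
  rw [hperm, Matrix.det_permutation]
  rcases Int.units_eq_one_or (Equiv.Perm.sign (Fin.revPerm (n := a + 1))) with h | h <;> simp [h]

theorem le_of_binaryCoeff_mem_zariskiClosure_secantCone {a r : ℕ} (hd : d ≠ 0) (ha : 2 * a ≤ d)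
    (h : binaryCoeff K d a ∈ zariskiClosure (K := K) (secantCone (XSet K 1 d) r)) : a + 1 ≤ r := by
  by_contra! hr
  refine det_hankel_binaryCoeff_ne_zero ha
    (h _ (det_mem_polyFunctions (hankel ha)) fun φ hφ => ?_)
  rw [XSet_eq_nuSet, mem_secantCone_nuSet_iff hd] at hφ
  obtain ⟨T, -, hT, hφ⟩ := hφ
  exact det_hankel_eq_zero ha (hT.trans (Nat.le_of_lt_succ hr)) hφ

theorem binaryCoeff_mem_secantCone_iff [IsAlgClosed K] {a r : ℕ} (ha : a ≠ 0) (had : 2 * a < d) :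
    binaryCoeff K d a ∈ secantCone (XSet K 1 d) r ↔ d - a + 1 ≤ r := by
  rw [XSet_eq_nuSet]
  constructor
  · rw [mem_secantCone_nuSet_iff (by omega)]
    rintro ⟨T, -, hT, h⟩
    exact (lt_card_of_binaryCoeff_mem_span_nu ha (by omega) h).trans_le hT
  · obtain ⟨T, hT, h⟩ := exists_binaryCoeff_mem_span_nu (K := K) had
    exact fun hr => (mem_secantCone_nuSet_iff (by omega)).2
      ⟨T, fun _ _ => trivial, hT.trans hr, h⟩

theorem binaryCoeff_mem_zariskiClosure_secantCone_iff [Infinite K] {a r : ℕ} (hd : d ≠ 0)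
    (ha : 2 * a ≤ d) :
    binaryCoeff K d a ∈ zariskiClosure (K := K) (secantCone (XSet K 1 d) r) ↔ a + 1 ≤ r :=
  ⟨le_of_binaryCoeff_mem_zariskiClosure_secantCone hd ha, fun hr =>
    zariskiClosure_mono (secantCone_mono hr)
      (binaryCoeff_mem_zariskiClosure_secantCone hd (by omega))⟩

end BinaryForms

section Lines

variable {K : Type} [Field K] {m d : ℕ}

lemma exists_isLine (hm : 1 ≤ m) : ∃ L : Set (Pm K m), IsLine L := by
  obtain ⟨v, hv⟩ := exists_linearIndependent_of_le_finrank (R := K) (M := Fin (m + 1) → K) (n := 2)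
    (by simpa using hm)
  exact ⟨_, Submodule.span K (Set.range v), by simpa using finrank_span_eq_card hv, rfl⟩

lemma exists_leftInverse_forall_mem_of_finrank_eq {n : ℕ} {W : Submodule K (Fin (m + 1) → K)}
    (hW : finrank K W = n) :
    ∃ (i : (Fin n → K) →ₗ[K] (Fin (m + 1) → K)) (p : (Fin (m + 1) → K) →ₗ[K] (Fin n → K)),
      (∀ v, i v ∈ W) ∧ p ∘ₗ i = .id := by
  let e : (Fin n → K) ≃ₗ[K] W := LinearEquiv.ofFinrankEq _ _ (by simp [hW])
  obtain ⟨p, hp⟩ := (W.subtype ∘ₗ e.toLinearMap).exists_leftInverse_of_injective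
    (LinearMap.ker_eq_bot.2 (W.injective_subtype.comp e.injective))
  exact ⟨_, p, fun v => (e v).2, hp⟩

lemma veroneseMap_mem_dualSpan (hd : d ≠ 0) {n : ℕ} {W : Submodule K (Fin (n + 1) → K)}
    {p : (Fin (m + 1) → K) →ₗ[K] (Fin (n + 1) → K)} (hp : ∀ v, p v ∈ W) {x : Dual K (Hd K m d)}
    (hx : x ∈ Submodule.span K (Set.range (nu d))) :
    veroneseMap d p x ∈ dualSpan d (linearLocus W) := by
  refine Submodule.span_le (p := (dualSpan d (linearLocus W)).comap (veroneseMap d p)).2 ?_ hx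
  rintro _ ⟨v, rfl⟩
  rw [SetLike.mem_coe, Submodule.mem_comap, veroneseMap_nu]
  exact nu_mem_dualSpan hd (hp v)

theorem exists_mem_sigmaSet_of_isLine [IsAlgClosed K] {s : ℕ} (hs : 2 ≤ s) (hd : 2 * s ≤ d + 1)
    {L : Set (Pm K m)} (hL : IsLine L) : ∃ P ∈ sigmaSet K m d s (d + 2 - s), inSpanSet d L P := by
  obtain ⟨W, hW, rfl⟩ := hL
  obtain ⟨a, rfl⟩ : ∃ a, s = a + 1 := ⟨s - 1, by omega⟩
  have hd0 : d ≠ 0 := by omega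
  obtain ⟨i, p, hi, hpi⟩ := exists_leftInverse_forall_mem_of_finrank_eq hW
  obtain ⟨T, -, hT⟩ := exists_binaryCoeff_mem_span_nu (K := K) (by omega : 2 * a < d)
  have hspan : binaryCoeff K d a ∈ Submodule.span K (Set.range (nu d)) :=
    Submodule.span_mono (Set.image_subset_range _ _) hT
  let y := veroneseMap d i (binaryCoeff K d a)
  have hy : veroneseMap d p y = binaryCoeff K d a := by
    rw [← veroneseMap_comp_apply, hpi]
    exact veroneseMap_eq_self (W := ⊤) (fun _ _ => rfl) (by simpa using hspan)
  have hy0 : y ≠ 0 := fun h =>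
    binaryCoeff_ne_zero (by omega : a ≤ d) (by rw [← hy, h, map_zero])
  refine ⟨.mk K y hy0, ⟨brankWrt_mk_eq hy0 (by omega) fun r => ?_,
    rankWrt_mk_eq hy0 fun r => ?_⟩, ?_⟩
  · rw [← binaryCoeff_mem_zariskiClosure_secantCone_iff (K := K) hd0 (by omega), XSet_eq_nuSet,
      XSet_eq_nuSet]
    exact mem_zariskiClosure_secantCone_iff_of_veroneseMap_eq hd0 le_top le_top rfl hy
  · rw [show d + 2 - (a + 1) = d - a + 1 by omega,
      ← binaryCoeff_mem_secantCone_iff (K := K) (by omega) (by omega), XSet_eq_nuSet,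
      XSet_eq_nuSet]
    exact mem_secantCone_iff_of_veroneseMap_eq hd0 le_top le_top rfl hy
  · exact (rep_mk_mem_iff (fun c _ h => Submodule.smul_mem _ c h) hy0).2
      (veroneseMap_mem_dualSpan hd0 hi hspan)

end Lines

theorem stmt13_general (K : Type) [Field K] [IsAlgClosed K] (m s d : ℕ) (hs : 2 ≤ s)
    (hd : 2 * s ≤ d + 1) :
    (∀ L : Set (Pm K m), IsLine L → ∃ P ∈ sigmaSet K m d s (d + 2 - s), inSpanSet d L P) ∧
    (∀ L : Set (Pm K m), IsLinearSub L → ∀ P : PN K m d, inSpanSet d L P →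
      srank d P = rankWrt (nuSet d L) P ∧ brank d P = brankWrt (nuSet d L) P) :=
  have hd0 : d ≠ 0 := by omega
  ⟨fun _ hL => exists_mem_sigmaSet_of_isLine hs hd hL, fun _ hL _ hP =>
    ⟨rankWrt_XSet_eq_rankWrt_nuSet hd0 hL hP, brankWrt_XSet_eq_brankWrt_nuSet hd0 hL hP⟩⟩

/-- `σ_{s,d-s+2}(X_{m,d}) ≠ ∅`, witnessed by points in the span of `ν_d(L)` for a line
`L ⊂ ℙ^m`; moreover, for any line `L` and any `P ∈ ⟨ν_d(L)⟩` the symmetric rank and border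
rank of `P` with respect to `X_{m,d}` coincide with those with respect to the rational normal
curve `ν_d(L) ≅ X_{1,d}`. -/
theorem stmt13 (K : Type) [Field K] [IsAlgClosed K] [CharZero K]
    (m s d : ℕ) (hm : 1 ≤ m) (hs : 2 ≤ s) (hd : 2 * s ≤ d + 1) :
    (∃ L : Set (Pm K m), IsLine L ∧
      ∃ P ∈ sigmaSet K m d s (d + 2 - s), inSpanSet d L P) ∧
    (∀ L : Set (Pm K m), IsLine L → ∀ P : PN K m d, inSpanSet d L P →
      srank d P = rankWrt (nuSet d L) P ∧ brank d P = brankWrt (nuSet d L) P) := by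
  obtain ⟨hsigma, hranks⟩ := stmt13_general K m s d hs hd
  obtain ⟨L, hL⟩ := exists_isLine (K := K) hm
  exact ⟨⟨L, hL, hsigma L hL⟩, fun L ⟨W, _, hW⟩ => hranks L ⟨W, hW⟩⟩
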